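/- arXiv:2107.07433 — 2 statements merged into one kernel-verified Lean document; each statement's English description precedes it below -/
import Mathlib

section
/- There exists an injective Boolean algebra homomorphism from the countable product Boolean algebra ∏_{n∈ℕ} (𝒫(ℕ)/Δ_d) into 𝒫(ℕ)/Δ_d. -/
open Filter Topology MeasureTheory
open scoped symmDiff

/-- Upper asymptotic density: `d*(A) = limsup |A ∩ {0,…,n−1}|/n`. -/
noncomputable def upperDensity (A : Set ℕ) : ℝ :=
  Filter.limsup (fun n : ℕ => ((A ∩ Set.Iio n).ncard : ℝ) / n) Filter.atTop

/-- `A` has asymptotic density `α`: `lim |A ∩ {0,…,n−1}|/n = α`. -/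
def HasDensity (A : Set ℕ) (α : ℝ) : Prop :=
  Filter.Tendsto (fun n : ℕ => ((A ∩ Set.Iio n).ncard : ℝ) / n) Filter.atTop (nhds α)

/-!
Spread the coordinates over the columns of the bijection `(k, j) ↦ 2 ^ k * (2 * j + 1) - 1` from
`ℕ × ℕ` to `ℕ`, copying the `k`-th coordinate into the `k`-th column. This commutes with the
Boolean operations on the nose. Each column stretches `ℕ` by a bounded factor, so a coordinate has
density zero iff its copy does. Finally, the columns of index at least `K` jointly have density
`1 / 2 ^ K`, so infinitely many null columns cannot add up to a set of positive upper density.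
-/

/-- The relative frequency `|A ∩ {0,…,n−1}|/n`, whose limit along `n` is the asymptotic density of
`A`; at `n = 0` it is `0 / 0 = 0`. -/
noncomputable def partialDensity (A : Set ℕ) (n : ℕ) : ℝ :=
  ((A ∩ Set.Iio n).ncard : ℝ) / n

lemma partialDensity_nonneg (A : Set ℕ) (n : ℕ) : 0 ≤ partialDensity A n := by
  unfold partialDensity
  positivity

lemma partialDensity_le_one (A : Set ℕ) (n : ℕ) : partialDensity A n ≤ 1 := by
  have hcard : (A ∩ Set.Iio n).ncard ≤ n := by
    simpa using Set.ncard_le_ncard (Set.inter_subset_right (s := A) (t := Set.Iio n))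
  exact div_le_one_of_le₀ (mod_cast hcard) n.cast_nonneg

lemma partialDensity_mono {A B : Set ℕ} (h : A ⊆ B) (n : ℕ) :
    partialDensity A n ≤ partialDensity B n := by
  have hcard := Set.ncard_le_ncard (Set.inter_subset_inter_left (Set.Iio n) h)
  unfold partialDensity
  gcongr

lemma partialDensity_union_le (A B : Set ℕ) (n : ℕ) :
    partialDensity (A ∪ B) n ≤ partialDensity A n + partialDensity B n := by
  have hcard := Set.ncard_union_le (A ∩ Set.Iio n) (B ∩ Set.Iio n)
  rw [← Set.union_inter_distrib_right] at hcard
  unfold partialDensity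
  rw [← add_div]
  gcongr
  exact_mod_cast hcard

lemma partialDensity_image_le {A : Set ℕ} {f : ℕ → ℕ} (hf : ∀ j ∈ A, j ≤ f j) (n : ℕ) :
    partialDensity (f '' A) n ≤ partialDensity A n := by
  have hsub : f '' A ∩ Set.Iio n ⊆ f '' (A ∩ Set.Iio n) := by
    rintro _ ⟨⟨j, hj, rfl⟩, hn⟩
    exact ⟨j, ⟨hj, (hf j hj).trans_lt hn⟩, rfl⟩
  have hcard : (f '' A ∩ Set.Iio n).ncard ≤ (A ∩ Set.Iio n).ncard :=
    (Set.ncard_le_ncard hsub).trans Set.ncard_image_le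
  unfold partialDensity
  gcongr

lemma partialDensity_le_mul_partialDensity_image {A : Set ℕ} {f : ℕ → ℕ} {C : ℕ} (hC : C ≠ 0)
    (hinj : Set.InjOn f A) (hf : ∀ j ∈ A, f j < C * (j + 1)) (n : ℕ) :
    partialDensity A n ≤ C * partialDensity (f '' A) (C * n) := by
  have hsub : f '' (A ∩ Set.Iio n) ⊆ f '' A ∩ Set.Iio (C * n) := by
    rintro _ ⟨j, ⟨hj, hn⟩, rfl⟩
    exact ⟨⟨j, hj, rfl⟩, (hf j hj).trans_le (Nat.mul_le_mul_left C hn)⟩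
  have hcard := Set.ncard_le_ncard hsub
  rw [(hinj.mono Set.inter_subset_left).ncard_image] at hcard
  unfold partialDensity
  rw [Nat.cast_mul, mul_div_assoc', mul_div_mul_left _ _ (Nat.cast_ne_zero.2 hC)]
  gcongr

lemma partialDensity_setOf_dvd_succ_le (d n : ℕ) :
    partialDensity {m | d ∣ m + 1} n ≤ 1 / d := by
  have hset : {m | d ∣ m + 1} ∩ Set.Iio n = ({m ∈ Finset.range n | d ∣ m + 1} : Finset ℕ) := by
    ext m
    simp [and_comm]
  have hcard : ({m | d ∣ m + 1} ∩ Set.Iio n).ncard = n / d := by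
    rw [hset, Set.ncard_coe_finset, Nat.card_multiples]
  unfold partialDensity
  rw [hcard]
  refine div_le_of_le_mul₀ n.cast_nonneg (by positivity) ?_
  rw [one_div_mul_eq_div]
  exact Nat.cast_div_le

lemma isBoundedUnder_le_partialDensity (A : Set ℕ) :
    IsBoundedUnder (· ≤ ·) atTop (partialDensity A) :=
  isBoundedUnder_of ⟨1, partialDensity_le_one A⟩

lemma isBoundedUnder_ge_partialDensity (A : Set ℕ) :
    IsBoundedUnder (· ≥ ·) atTop (partialDensity A) :=
  isBoundedUnder_of ⟨0, partialDensity_nonneg A⟩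

lemma upperDensity_le_of_forall_partialDensity_le {A : Set ℕ} {c : ℝ}
    (h : ∀ n, partialDensity A n ≤ c) : upperDensity A ≤ c :=
  limsup_le_of_le (isBoundedUnder_ge_partialDensity A).isCoboundedUnder_le (.of_forall h)

lemma upperDensity_le_upperDensity_of_forall_partialDensity_le {A B : Set ℕ}
    (h : ∀ n, partialDensity A n ≤ partialDensity B n) : upperDensity A ≤ upperDensity B :=
  limsup_le_limsup (.of_forall h) (isBoundedUnder_ge_partialDensity A).isCoboundedUnder_le
    (isBoundedUnder_le_partialDensity B)

lemma upperDensity_nonneg (A : Set ℕ) : 0 ≤ upperDensity A :=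
  le_limsup_of_frequently_le (.of_forall (partialDensity_nonneg A))
    (isBoundedUnder_le_partialDensity A)

lemma upperDensity_mono {A B : Set ℕ} (h : A ⊆ B) : upperDensity A ≤ upperDensity B :=
  upperDensity_le_upperDensity_of_forall_partialDensity_le (partialDensity_mono h)

lemma upperDensity_empty : upperDensity ∅ = 0 := by
  simp [upperDensity]

lemma upperDensity_union_le (A B : Set ℕ) :
    upperDensity (A ∪ B) ≤ upperDensity A + upperDensity B := by
  have hA := isBoundedUnder_le_partialDensity A
  have hB := isBoundedUnder_le_partialDensity B
  calc upperDensity (A ∪ B) ≤ limsup (partialDensity A + partialDensity B) atTop :=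
        limsup_le_limsup (.of_forall (partialDensity_union_le A B))
          (isBoundedUnder_ge_partialDensity _).isCoboundedUnder_le (isBoundedUnder_le_add hA hB)
    _ ≤ upperDensity A + upperDensity B :=
        limsup_add_le (isBoundedUnder_ge_partialDensity A) hA
          (isBoundedUnder_ge_partialDensity B).isCoboundedUnder_le hB

lemma upperDensity_biUnion_le {ι : Type*} (s : Finset ι) (A : ι → Set ℕ) :
    upperDensity (⋃ i ∈ s, A i) ≤ ∑ i ∈ s, upperDensity (A i) := by
  classical
  induction s using Finset.induction_on with
  | empty => simp [upperDensity_empty]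
  | insert i s hi ih =>
    rw [Finset.set_biUnion_insert, Finset.sum_insert hi]
    exact (upperDensity_union_le _ _).trans (by gcongr)

lemma upperDensity_image_le {A : Set ℕ} {f : ℕ → ℕ} (hf : ∀ j ∈ A, j ≤ f j) :
    upperDensity (f '' A) ≤ upperDensity A :=
  upperDensity_le_upperDensity_of_forall_partialDensity_le (partialDensity_image_le hf)

lemma hasDensity_zero_iff_upperDensity_le_zero {A : Set ℕ} :
    HasDensity A 0 ↔ upperDensity A ≤ 0 := by
  refine ⟨fun h => (Tendsto.limsup_eq h).le, fun h => ?_⟩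
  have hle := isBoundedUnder_le_partialDensity A
  have hge := isBoundedUnder_ge_partialDensity A
  exact tendsto_of_le_liminf_of_limsup_le
    (le_liminf_of_le hle.isCoboundedUnder_ge (.of_forall (partialDensity_nonneg A))) h hle hge

lemma hasDensity_empty : HasDensity ∅ 0 := by
  simp [HasDensity]

lemma HasDensity.mono_zero {A B : Set ℕ} (hB : HasDensity B 0) (h : A ⊆ B) : HasDensity A 0 :=
  squeeze_zero (partialDensity_nonneg A) (partialDensity_mono h) hB

lemma HasDensity.zero_of_image {A : Set ℕ} {f : ℕ → ℕ} {C : ℕ} (h : HasDensity (f '' A) 0)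
    (hinj : Set.InjOn f A) (hf : ∀ j ∈ A, f j < C * (j + 1)) : HasDensity A 0 := by
  obtain rfl | hC := eq_or_ne C 0
  · have hA : A = ∅ := Set.eq_empty_of_forall_notMem fun j hj => by simpa using hf j hj
    exact hA ▸ hasDensity_empty
  have hscale : Tendsto (fun n : ℕ => C * n) atTop atTop :=
    tendsto_id.const_mul_atTop' (Nat.pos_of_ne_zero hC)
  have hlim : Tendsto (fun n => C * partialDensity (f '' A) (C * n)) atTop (𝓝 0) := by
    rw [← mul_zero (C : ℝ)]
    exact (Tendsto.comp h hscale).const_mul (C : ℝ)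
  exact squeeze_zero (partialDensity_nonneg A)
    (partialDensity_le_mul_partialDensity_image hC hinj hf) hlim

/-- The union over `i` of the copies of `a i` in the `i`-th column of `X`, where `e` assigns to a
point of `X` its column and its place in that column. It is encoded as a preimage, which makes it
commute definitionally with the Boolean operations. -/
def interleave {X Y ι : Type*} (e : X ≃ ι × Y) (a : ι → Set Y) : Set X :=
  {x | (e x).2 ∈ a (e x).1}

section interleave

variable {X Y ι : Type*} (e : X ≃ ι × Y)

lemma interleave_inter (a b : ι → Set Y) :
    interleave e (fun i => a i ∩ b i) = interleave e a ∩ interleave e b := rfl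

lemma interleave_union (a b : ι → Set Y) :
    interleave e (fun i => a i ∪ b i) = interleave e a ∪ interleave e b := rfl

lemma interleave_compl (a : ι → Set Y) :
    interleave e (fun i => (a i)ᶜ) = (interleave e a)ᶜ := rfl

lemma interleave_symmDiff (a b : ι → Set Y) :
    interleave e (fun i => a i ∆ b i) = interleave e a ∆ interleave e b := rfl

lemma interleave_eq_iUnion (a : ι → Set Y) :
    interleave e a = ⋃ i, (fun y => e.symm (i, y)) '' a i := by
  ext x
  obtain ⟨⟨i, y⟩, rfl⟩ := e.symm.surjective x
  simp [interleave]

end interleave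

lemma interleave_subset_biUnion_union (e : ℕ ≃ ℕ × ℕ) (c : ℕ → Set ℕ) (K : ℕ) :
    interleave e c ⊆
      (⋃ k ∈ Finset.range K, (fun j => e.symm (k, j)) '' c k) ∪ {m | K ≤ (e m).1} := by
  rw [interleave_eq_iUnion]
  rintro _ ⟨_, ⟨k, rfl⟩, j, hj, rfl⟩
  obtain hk | hk := lt_or_ge k K
  · exact Or.inl (Set.mem_biUnion (Finset.mem_range.2 hk) ⟨j, hj, rfl⟩)
  · exact Or.inr (by simpa using hk)

theorem hasDensity_zero_interleave {e : ℕ ≃ ℕ × ℕ} (he : ∀ k j, j ≤ e.symm (k, j))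
    (htail : Tendsto (fun K => upperDensity {m | K ≤ (e m).1}) atTop (𝓝 0))
    {c : ℕ → Set ℕ} (hc : ∀ k, HasDensity (c k) 0) : HasDensity (interleave e c) 0 := by
  have hcolumn (k : ℕ) : upperDensity ((fun j => e.symm (k, j)) '' c k) ≤ 0 :=
    (upperDensity_image_le fun j _ => he k j).trans
      (hasDensity_zero_iff_upperDensity_le_zero.1 (hc k))
  refine hasDensity_zero_iff_upperDensity_le_zero.2 (ge_of_tendsto' htail fun K => ?_)
  calc upperDensity (interleave e c)
      ≤ upperDensity (⋃ k ∈ Finset.range K, (fun j => e.symm (k, j)) '' c k) +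
          upperDensity {m | K ≤ (e m).1} :=
        (upperDensity_mono (interleave_subset_biUnion_union e c K)).trans
          (upperDensity_union_le _ _)
    _ ≤ 0 + upperDensity {m | K ≤ (e m).1} := by
        gcongr
        exact (upperDensity_biUnion_le _ _).trans (Finset.sum_nonpos fun k _ => hcolumn k)
    _ = upperDensity {m | K ≤ (e m).1} := zero_add _

theorem HasDensity.zero_of_interleave {ι : Type*} {e : ℕ ≃ ι × ℕ} {c : ι → Set ℕ}
    (h : HasDensity (interleave e c) 0) {k : ι} {C : ℕ} (hC : ∀ j, e.symm (k, j) < C * (j + 1)) :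
    HasDensity (c k) 0 := by
  have hcolumn : (fun j => e.symm (k, j)) '' c k ⊆ interleave e c := by
    rw [interleave_eq_iUnion]
    exact Set.subset_iUnion (fun k => (fun j => e.symm (k, j)) '' c k) k
  have hinj : Function.Injective fun j => e.symm (k, j) :=
    e.symm.injective.comp (Prod.mk_right_injective k)
  exact (h.mono_zero hcolumn).zero_of_image hinj.injOn fun j _ => hC j

/-- The bijection `ℕ ≃ ℕ × ℕ` whose inverse is `(k, j) ↦ 2 ^ k * (2 * j + 1) - 1`: write `m + 1` as
a power of two times an odd number. The shift by one keeps `0`, which has no such factorization,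
out of the way. -/
def dyadicEquiv : ℕ ≃ ℕ × ℕ where
  toFun m := (padicValNat 2 (m + 1), (m + 1).divMaxPow 2 / 2)
  invFun p := 2 ^ p.1 * (2 * p.2 + 1) - 1
  left_inv m := by
    have hodd : Odd ((m + 1).divMaxPow 2) :=
      Nat.odd_iff.2 (Nat.two_dvd_ne_zero.1 (Nat.not_dvd_divMaxPow one_lt_two m.succ_ne_zero))
    simp only [Nat.two_mul_div_two_add_one_of_odd hodd, Nat.pow_padicValNat_mul_divMaxPow,
      Nat.add_sub_cancel]
  right_inv := by
    rintro ⟨k, j⟩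
    have hodd : ¬2 ∣ 2 * j + 1 := by omega
    have hfactor : Nat.maxPowDvdDiv 2 (2 ^ k * (2 * j + 1)) = (k, 2 * j + 1) :=
      Nat.maxPowDvdDiv_of_pow_mul_eq (by positivity) rfl hodd
    have hdiv : (2 * j + 1) / 2 = j := by omega
    have hsucc : 2 ^ k * (2 * j + 1) - 1 + 1 = 2 ^ k * (2 * j + 1) :=
      Nat.sub_one_add_one (by positivity)
    simp only [hsucc, padicValNat, Nat.divMaxPow, hfactor, hdiv]

lemma dyadicEquiv_symm_succ (k j : ℕ) : dyadicEquiv.symm (k, j) + 1 = 2 ^ k * (2 * j + 1) :=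
  Nat.sub_one_add_one (by positivity : 2 ^ k * (2 * j + 1) ≠ 0)

lemma le_dyadicEquiv_symm (k j : ℕ) : j ≤ dyadicEquiv.symm (k, j) := by
  have hsucc := dyadicEquiv_symm_succ k j
  have hpow : 2 * j + 1 ≤ 2 ^ k * (2 * j + 1) := Nat.le_mul_of_pos_left _ (by positivity)
  omega

lemma dyadicEquiv_symm_lt (k j : ℕ) : dyadicEquiv.symm (k, j) < 2 ^ (k + 1) * (j + 1) := by
  calc dyadicEquiv.symm (k, j) < 2 ^ k * (2 * j + 1) := by
        rw [← dyadicEquiv_symm_succ]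
        exact Nat.lt_succ_self _
    _ ≤ 2 ^ k * (2 * (j + 1)) := by gcongr; omega
    _ = 2 ^ (k + 1) * (j + 1) := by ring

lemma le_dyadicEquiv_fst_iff {K m : ℕ} : K ≤ (dyadicEquiv m).1 ↔ 2 ^ K ∣ m + 1 :=
  (padicValNat_dvd_iff_le m.succ_ne_zero).symm

lemma tendsto_upperDensity_dyadicEquiv_tail :
    Tendsto (fun K => upperDensity {m | K ≤ (dyadicEquiv m).1}) atTop (𝓝 0) := by
  have hpow : Tendsto (fun K : ℕ => (1 / 2 : ℝ) ^ K) atTop (𝓝 0) :=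
    tendsto_pow_atTop_nhds_zero_of_lt_one (by norm_num) (by norm_num)
  refine squeeze_zero (fun K => upperDensity_nonneg _) (fun K => ?_) hpow
  simp only [le_dyadicEquiv_fst_iff]
  refine upperDensity_le_of_forall_partialDensity_le fun n => ?_
  simpa using partialDensity_setOf_dvd_succ_le (2 ^ K) n

/-- Proposition 4: the countable product `∏_{n∈ℕ} (𝒫(ℕ)/Δ_d)` embeds into `𝒫(ℕ)/Δ_d`.
Stated on representatives: `φ` is well defined modulo `Δ_d` (coordinatewise on the source),
preserves the Boolean operations modulo `Δ_d`, and is injective modulo `Δ_d`. -/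
theorem product_embeds_into_density_quotient :
    ∃ φ : (ℕ → Set ℕ) → Set ℕ,
      -- well defined on the quotient
      (∀ a b : ℕ → Set ℕ, (∀ n, HasDensity (a n ∆ b n) 0) → HasDensity (φ a ∆ φ b) 0) ∧
      -- Boolean algebra homomorphism modulo `Δ_d`
      (∀ a b : ℕ → Set ℕ, HasDensity (φ (fun n => a n ∩ b n) ∆ (φ a ∩ φ b)) 0) ∧
      (∀ a b : ℕ → Set ℕ, HasDensity (φ (fun n => a n ∪ b n) ∆ (φ a ∪ φ b)) 0) ∧
      (∀ a : ℕ → Set ℕ, HasDensity (φ (fun n => (a n)ᶜ) ∆ (φ a)ᶜ) 0) ∧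
      -- injective on the quotient
      (∀ a b : ℕ → Set ℕ, HasDensity (φ a ∆ φ b) 0 → ∀ n, HasDensity (a n ∆ b n) 0) := by
  refine ⟨interleave dyadicEquiv, fun a b h => ?_, fun a b => ?_, fun a b => ?_, fun a => ?_,
    fun a b h n => ?_⟩
  · rw [← interleave_symmDiff]
    exact hasDensity_zero_interleave le_dyadicEquiv_symm tendsto_upperDensity_dyadicEquiv_tail h
  · rw [interleave_inter, symmDiff_self]
    exact hasDensity_empty
  · rw [interleave_union, symmDiff_self]
    exact hasDensity_empty
  · rw [interleave_compl, symmDiff_self]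
    exact hasDensity_empty
  · rw [← interleave_symmDiff] at h
    exact h.zero_of_interleave (dyadicEquiv_symm_lt n)
end

section
/- For every ultrafilter U on ℕ containing no set of asymptotic density zero, and for every ε > 0, there exists A ∈ U with d*(A) < ε. -/
/-! The residue classes modulo `k` partition `ℕ` into finitely many pieces, so an ultrafilter
contains one of them. Each class has asymptotic density `1 / k`, which is small for large `k`. -/

open Filter Topology MeasureTheory
open scoped symmDiff

theorem HasDensity.upperDensity_eq {A : Set ℕ} {α : ℝ} (h : HasDensity A α) :
    upperDensity A = α :=
  h.limsup_eq

theorem HasDensity.of_abs_ncard_sub_mul_le {A : Set ℕ} {α C : ℝ}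
    (h : ∀ᶠ n : ℕ in atTop, |((A ∩ Set.Iio n).ncard : ℝ) - α * n| ≤ C) : HasDensity A α := by
  refine tendsto_iff_norm_sub_tendsto_zero.2 <|
    squeeze_zero' (.of_forall fun _ => norm_nonneg _) ?_ (tendsto_const_div_atTop_nhds_zero_nat C)
  filter_upwards [h, eventually_gt_atTop 0] with n hC hn
  have hn' : (0 : ℝ) < n := Nat.cast_pos.2 hn
  calc ‖((A ∩ Set.Iio n).ncard : ℝ) / n - α‖
      = |((A ∩ Set.Iio n).ncard : ℝ) - α * n| / n := by
        rw [Real.norm_eq_abs, div_sub' hn'.ne', abs_div, abs_of_pos hn', mul_comm α]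
    _ ≤ C / n := by gcongr

theorem ncard_ofPred_inter_Iio (p : ℕ → Prop) [DecidablePred p] (n : ℕ) :
    ({x | p x} ∩ Set.Iio n).ncard = n.count p := by
  rw [Nat.count_eq_card_filter_range, ← Set.ncard_coe_finset]
  congr 1
  ext x
  simp [and_comm]

theorem abs_count_modEq_sub_le_one {k : ℕ} (hk : 0 < k) (r n : ℕ) :
    |(n.count (· ≡ r [MOD k]) : ℝ) - (k : ℝ)⁻¹ * n| ≤ 1 := by
  have hlower : ((n / k : ℕ) : ℝ) ≤ (k : ℝ)⁻¹ * n := by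
    simpa [div_eq_inv_mul] using Nat.cast_div_le (α := ℝ) (m := n) (n := k)
  have hupper : (k : ℝ)⁻¹ * n ≤ (n / k : ℕ) + 1 := by
    rw [← div_eq_inv_mul, div_le_iff₀ (Nat.cast_pos.2 hk)]
    exact_mod_cast (Nat.lt_mul_of_div_lt (Nat.lt_succ_self _) hk).le
  rw [Nat.count_modEq_card n hk, abs_le]
  split_ifs <;> push_cast <;> constructor <;> linarith

theorem hasDensity_modEq {k : ℕ} (hk : 0 < k) (r : ℕ) :
    HasDensity {x | x ≡ r [MOD k]} (k : ℝ)⁻¹ :=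
  .of_abs_ncard_sub_mul_le <| .of_forall fun n => by
    simpa only [ncard_ofPred_inter_Iio] using abs_count_modEq_sub_le_one hk r n

theorem exists_preimage_singleton_mem_ultrafilter {α β : Type*} [Finite β]
    (U : Ultrafilter α) (f : α → β) : ∃ b, f ⁻¹' {b} ∈ U := by
  obtain ⟨b, hb⟩ := (U.map f).eq_pure_of_finite
  exact ⟨b, Ultrafilter.mem_map.1 (hb ▸ Ultrafilter.mem_pure.2 rfl)⟩

theorem exists_modEq_mem_ultrafilter {k : ℕ} (hk : 0 < k) (U : Ultrafilter ℕ) :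
    ∃ r, {x | x ≡ r [MOD k]} ∈ U := by
  have : NeZero k := ⟨hk.ne'⟩
  obtain ⟨c, hc⟩ := exists_preimage_singleton_mem_ultrafilter U (Nat.cast : ℕ → ZMod k)
  refine ⟨c.val, mem_of_superset hc fun x hx => ?_⟩
  exact (ZMod.natCast_eq_natCast_iff x c.val k).1 (hx.trans (ZMod.natCast_zmod_val c).symm)

theorem exists_small_upperDensity_mem_general (U : Ultrafilter ℕ) (ε : ℝ) (hε : 0 < ε) :
    ∃ A ∈ U, upperDensity A < ε := by
  obtain ⟨k, hk, hkε⟩ := Real.exists_nat_pos_inv_lt hε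
  obtain ⟨r, hr⟩ := exists_modEq_mem_ultrafilter hk U
  exact ⟨_, hr, (hasDensity_modEq hk r).upperDensity_eq.trans_lt hkε⟩

/-- Lemma 3: every ultrafilter on `ℕ` containing no set of asymptotic density zero
contains sets of arbitrarily small upper density. -/
theorem exists_small_upperDensity_mem
    (U : Ultrafilter ℕ) (hU : ∀ A : Set ℕ, A ∈ U → ¬ HasDensity A 0)
    (ε : ℝ) (hε : 0 < ε) :
    ∃ A ∈ U, upperDensity A < ε :=
  exists_small_upperDensity_mem_general U ε hε
end
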